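/- Fix a real number c with 0 ≤ c < 1 and set ξ∨ = 2−c. Then ψ₂(t,ξ∨) ≤ 0 for all t ∈ [−1,1] and ψ₂(0,ξ∨) = 0; moreover, for every ξ > 0 such that ψ₂(t,ξ) ≤ 0 for all t ∈ [−1,1], one has ξ ≤ 2−c and sup over t ∈ [−1,1] of |ψ₂(t,ξ)| is at least sup over t ∈ [−1,1] of |ψ₂(t,ξ∨)|; i.e., ξ∨ = 2−c induces the optimal inner quadratic G⁰ approximant. -/

import Mathlib

/-- Simplified radial error of the quadratic G⁰ Bézier approximant of the unit circular arc. -/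
noncomputable def psi2 (c t ξ : ℝ) : ℝ :=
  (1/8) * (1 - t^2) * (2*(1 - t^2)*ξ^2 + 4*c*(1 + t^2)*ξ - 8 + 2*c^2*(1 - t^2))

/-- Sup over `t ∈ [−1,1]` of `|f t|`. -/
noncomputable def errSup (f : ℝ → ℝ) : ℝ :=
  sSup ((fun t => |f t|) '' Set.Icc (-1 : ℝ) 1)

/-- `ξ∨ = 2 − c` induces the optimal inner quadratic G⁰ approximant. -/
theorem stmt_1 (c : ℝ) (hc0 : 0 ≤ c) (hc1 : c < 1) :
    (∀ t ∈ Set.Icc (-1 : ℝ) 1, psi2 c t (2 - c) ≤ 0) ∧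
    psi2 c 0 (2 - c) = 0 ∧
    ∀ ξ > (0 : ℝ), (∀ t ∈ Set.Icc (-1 : ℝ) 1, psi2 c t ξ ≤ 0) →
      ξ ≤ 2 - c ∧ errSup (fun t => psi2 c t (2 - c)) ≤ errSup (fun t => psi2 c t ξ) := by
  have h1 : ∀ t ∈ Set.Icc (-1 : ℝ) 1, psi2 c t (2 - c) ≤ 0 := by
    rintro t ⟨ha, hb⟩
    have hs : 0 ≤ 1 - t^2 := by nlinarith
    have e : psi2 c t (2 - c) = -((1 - t^2) * ((1 - c)^2 * t^2)) := by
      unfold psi2; ring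
    rw [e]
    have : 0 ≤ (1 - t^2) * ((1 - c)^2 * t^2) := by positivity
    linarith
  refine ⟨h1, by unfold psi2; ring, ?_⟩
  intro ξ hξ h
  have hle : ξ ≤ 2 - c := by
    have h0 := h 0 (by constructor <;> norm_num)
    unfold psi2 at h0
    nlinarith
  refine ⟨hle, ?_⟩
  have hbdd : BddAbove ((fun t => |psi2 c t ξ|) '' Set.Icc (-1 : ℝ) 1) := by
    apply IsCompact.bddAbove_image isCompact_Icc
    unfold psi2
    fun_prop
  unfold errSup
  apply csSup_le ((Set.nonempty_Icc.2 (by norm_num)).image _)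
  rintro _ ⟨t, ht, rfl⟩
  refine le_trans ?_ (le_csSup hbdd ⟨t, ht, rfl⟩)
  have a := h1 t ht
  have b := h t ht
  simp only [abs_of_nonpos a, abs_of_nonpos b]
  have hs : 0 ≤ 1 - t^2 := by nlinarith [ht.1, ht.2]
  have e : psi2 c t (2 - c) - psi2 c t ξ =
      (1/8) * (1 - t^2) * ((2 - c - ξ) * (2 * (1 - t^2) * (2 - c + ξ) + 4 * c * (1 + t^2))) := by
    unfold psi2; ring
  have p1 : 0 ≤ 2 - c - ξ := by linarith
  have p2 : 0 ≤ 2 - c + ξ := by linarith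
  have : 0 ≤ (1/8) * (1 - t^2) * ((2 - c - ξ) * (2 * (1 - t^2) * (2 - c + ξ) + 4 * c * (1 + t^2))) := by
    positivity
  linarith
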